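/- Let M be a compact topological space, let [a,b] ⊂ ℝ, and let U : [a,b] × M → ℝ be continuous and such that the partial derivative ∂U/∂t exists and is jointly continuous on [a,b] × M. Define f(t) := min_{p ∈ M} U(t,p) and Ξ(t) := { p ∈ M : U(t,p) = f(t) }. Then f is Lipschitz on [a,b], and its one-sided derivatives exist and are given by: lim_{h→0⁺} (f(t+h) − f(t))/h = min_{p ∈ Ξ(t)} ∂U/∂t(t,p) for t ∈ [a,b), and lim_{h→0⁻} (f(t+h) − f(t))/h = max_{p ∈ Ξ(t)} ∂U/∂t(t,p) for t ∈ (a,b]. -/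

import Mathlib

/-!
By compactness the difference quotients of `U · p` at `t` converge to `Ut t p` uniformly in `p`, so
the claim about one-sided derivatives is the directional differentiability of the functional
`u ↦ ⨅ p, u p` at `U t` in the directions `± Ut t`. Its derivative in the direction `v` is the
minimum of `v` over the minimizers of `u`: points where `v` is at least slightly smaller than that
minimum stay away from the minimizers, so `u` exceeds its minimum there by a fixed amount, which no
perturbation of size `O(r)` can make up for.
-/

open Set Filter Topology

section Lipschitz

variable {ι X : Type*} [Nonempty ι] [PseudoMetricSpace X]

theorem lipschitzOnWith_iInf {U : X → ι → ℝ} {s : Set X} {K : NNReal}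
    (hU : ∀ i, LipschitzOnWith K (fun x => U x i) s) (hbdd : ∀ x ∈ s, BddBelow (range (U x))) :
    LipschitzOnWith K (fun x => ⨅ i, U x i) s := by
  refine .of_le_add_mul K fun x hx y hy => ?_
  rw [← sub_le_iff_le_add]
  refine le_ciInf fun i => ?_
  rw [sub_le_iff_le_add]
  exact (ciInf_le (hbdd x hx) i).trans ((hU i).le_add_mul hx hy)

end Lipschitz

section UniformSlope

variable {𝕜 G M : Type*} [RCLike 𝕜] [NormedAddCommGroup G] [NormedSpace 𝕜 G]

theorem norm_slope_sub_le_of_norm_hasDerivWithin_sub_le {s : Set 𝕜} {g g' : 𝕜 → G} {v : G} {C : ℝ}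
    (hs : Convex ℝ s) (hg : ∀ x ∈ s, HasDerivWithinAt g (g' x) s x)
    (hC : ∀ x ∈ s, ‖g' x - v‖ ≤ C) {x y : 𝕜} (hx : x ∈ s) (hy : y ∈ s) (hxy : x ≠ y) :
    ‖slope g x y - v‖ ≤ C := by
  have hderiv : ∀ z ∈ s, HasDerivWithinAt (fun z => g z - z • v) (g' z - v) s z := fun z hz => by
    simpa only [one_smul] using! (hg z hz).sub ((hasDerivWithinAt_id z s).smul_const v)
  have hmvt := hs.norm_image_sub_le_of_norm_hasDerivWithin_le hderiv hC hx hy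
  have hne : y - x ≠ 0 := sub_ne_zero.2 hxy.symm
  have hslope : slope g x y - v = (y - x)⁻¹ • (g y - y • v - (g x - x • v)) := by
    rw [sub_sub_sub_comm, ← sub_smul, smul_sub, inv_smul_smul₀ hne, slope_def_module]
  rw [hslope, norm_smul, norm_inv, inv_mul_le_iff₀ (norm_pos_iff.2 hne), mul_comm]
  exact hmvt

theorem tendstoUniformly_slope [TopologicalSpace M] [CompactSpace M] {s : Set 𝕜} {t : 𝕜}
    {U U' : 𝕜 → M → G} (hs : Convex ℝ s)
    (hU : ∀ x ∈ s, ∀ p, HasDerivWithinAt (fun y => U y p) (U' x p) s x)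
    (hU' : ContinuousOn U'.uncurry (s ×ˢ univ)) (ht : t ∈ s) :
    TendstoUniformly (fun x p => slope (fun y => U y p) t x) (U' t) (𝓝[s \ {t}] t) := by
  refine Metric.tendstoUniformly_iff.2 fun ε hε => ?_
  obtain ⟨W, hW, hclose⟩ :=
    isCompact_univ.mem_uniformity_of_prod hU' ht (Metric.dist_mem_uniformity (half_pos hε))
  obtain ⟨δ, hδ, hball⟩ := Metric.mem_nhdsWithin_iff.1 hW
  filter_upwards [self_mem_nhdsWithin, mem_nhdsWithin_of_mem_nhds (Metric.ball_mem_nhds t hδ)]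
    with x hx hxδ p
  have hbound : ∀ y ∈ Metric.ball t δ ∩ s, ‖U' y p - U' t p‖ ≤ ε / 2 := fun y hy => by
    rw [← dist_eq_norm]
    exact (hclose y (hball hy) p (mem_univ p)).le
  rw [dist_comm, dist_eq_norm]
  calc ‖slope (fun y => U y p) t x - U' t p‖
      ≤ ε / 2 := norm_slope_sub_le_of_norm_hasDerivWithin_sub_le ((convex_ball t δ).inter hs)
        (fun y hy => (hU y hy.2 p).mono inter_subset_right) hbound
        ⟨Metric.mem_ball_self hδ, ht⟩ ⟨hxδ, hx.1⟩ (Ne.symm hx.2)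
    _ < ε := half_lt_self hε

end UniformSlope

section DirectionalDerivative

variable {M : Type*} [TopologicalSpace M] [CompactSpace M] {u v : M → ℝ}

theorem bddBelow_range_of_lowerSemicontinuous (hu : LowerSemicontinuous u) :
    BddBelow (range u) := by
  rw [← image_univ]
  exact (hu.lowerSemicontinuousOn univ).bddBelow_of_isCompact isCompact_univ

theorem exists_eq_iInf_of_lowerSemicontinuous [Nonempty M] (hu : LowerSemicontinuous u) :
    ∃ p, u p = ⨅ q, u q := by
  obtain ⟨p, -, hp⟩ :=
    (hu.lowerSemicontinuousOn univ).exists_isMinOn univ_nonempty isCompact_univ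
  exact ⟨p, le_antisymm (le_ciInf fun q => hp (mem_univ q))
    (ciInf_le (bddBelow_range_of_lowerSemicontinuous hu) p)⟩

theorem exists_iInf_lt_forall_le_of_lt_sInf (hu : LowerSemicontinuous u)
    (hv : LowerSemicontinuous v) {c : ℝ} (hc : c < sInf (v '' {p | u p = ⨅ q, u q})) :
    ∃ d, ⨅ q, u q < d ∧ ∀ p, v p ≤ c → d ≤ u p := by
  have hcompact : IsCompact (v ⁻¹' Iic c) := (hv.isClosed_preimage c).isCompact
  rcases (v ⁻¹' Iic c).eq_empty_or_nonempty with hempty | hne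
  · exact ⟨(⨅ q, u q) + 1, lt_add_one _, fun p hp => (hempty.subset hp).elim⟩
  · obtain ⟨p, hp, hmin⟩ := (hu.lowerSemicontinuousOn _).exists_isMinOn hne hcompact
    refine ⟨u p, ?_, fun q hq => hmin hq⟩
    refine (ciInf_le (bddBelow_range_of_lowerSemicontinuous hu) p).lt_of_ne fun hup => ?_
    have hbdd : BddBelow (v '' {p | u p = ⨅ q, u q}) :=
      (bddBelow_range_of_lowerSemicontinuous hv).mono (image_subset_range v _)
    exact (hc.trans_le (csInf_le hbdd ⟨p, hup.symm, rfl⟩)).not_ge hp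

theorem eventually_forall_iInf_add_mul_le (hu : LowerSemicontinuous u)
    (hv : LowerSemicontinuous v) {c : ℝ} (hc : c < sInf (v '' {p | u p = ⨅ q, u q})) :
    ∀ᶠ r in 𝓝[>] (0 : ℝ), ∀ p, (⨅ q, u q) + r * c ≤ u p + r * v p := by
  obtain ⟨d, hd, hgap⟩ := exists_iInf_lt_forall_le_of_lt_sInf hu hv hc
  obtain ⟨B, hB⟩ := bddBelow_range_of_lowerSemicontinuous hv
  have hsmall : ∀ᶠ r in 𝓝[>] (0 : ℝ), r * (c - B) < d - ⨅ q, u q := by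
    have hcont : Tendsto (fun r : ℝ => r * (c - B)) (𝓝 0) (𝓝 0) :=
      Continuous.tendsto' (by fun_prop) _ _ (zero_mul _)
    exact (hcont.mono_left nhdsWithin_le_nhds).eventually_lt_const (sub_pos.2 hd)
  filter_upwards [hsmall, self_mem_nhdsWithin] with r hr (hr0 : 0 < r) p
  rcases le_total (v p) c with hp | hp
  · have hBp : r * B ≤ r * v p := by gcongr; exact hB ⟨p, rfl⟩
    linarith [hgap p hp]
  · have hup := ciInf_le (bddBelow_range_of_lowerSemicontinuous hu) p
    gcongr

variable {ι : Type*} {l : Filter ι} {r : ι → ℝ} {W : ι → M → ℝ}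

theorem eventually_forall_iInf_add_mul_le_of_tendstoUniformly (hu : LowerSemicontinuous u)
    (hv : LowerSemicontinuous v) (hr : Tendsto r l (𝓝[>] 0))
    (hW : TendstoUniformly (fun i p => (W i p - u p) / r i) v l)
    {c : ℝ} (hc : c < sInf (v '' {p | u p = ⨅ q, u q})) :
    ∀ᶠ i in l, ∀ p, (⨅ q, u q) + r i * c ≤ W i p := by
  obtain ⟨c', hcc', hc'⟩ := exists_between hc
  filter_upwards [hr.eventually (eventually_forall_iInf_add_mul_le hu hv hc'),
    hr.eventually self_mem_nhdsWithin, Metric.tendstoUniformly_iff.1 hW (c' - c) (sub_pos.2 hcc')]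
    with i hlinear (hri : 0 < r i) hclose p
  have hquot : v p - (c' - c) ≤ (W i p - u p) / r i := by
    linarith [(le_abs_self _).trans_lt (hclose p)]
  rw [le_div_iff₀ hri] at hquot
  linarith [hlinear p]

theorem tendsto_iInf_sub_iInf_div [Nonempty M] (hu : LowerSemicontinuous u)
    (hv : LowerSemicontinuous v) (hr : Tendsto r l (𝓝[>] 0))
    (hW : TendstoUniformly (fun i p => (W i p - u p) / r i) v l) :
    Tendsto (fun i => ((⨅ p, W i p) - ⨅ p, u p) / r i) l
      (𝓝 (sInf (v '' {p | u p = ⨅ q, u q}))) := by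
  have hlower {c : ℝ} (hc : c < sInf (v '' {p | u p = ⨅ q, u q})) :=
    eventually_forall_iInf_add_mul_le_of_tendstoUniformly hu hv hr hW hc
  have hpos : ∀ᶠ i in l, 0 < r i := hr.eventually self_mem_nhdsWithin
  refine tendsto_order.2 ⟨fun c hc => ?_, fun c hc => ?_⟩
  · obtain ⟨c', hcc', hc'⟩ := exists_between hc
    filter_upwards [hlower hc', hpos] with i hi hri
    rw [lt_div_iff₀ hri]
    have hmul : r i * c < r i * c' := by gcongr
    linarith [le_ciInf hi]
  · have hmin : {p | u p = ⨅ q, u q}.Nonempty := exists_eq_iInf_of_lowerSemicontinuous hu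
    obtain ⟨_, ⟨p, hp, rfl⟩, hpc⟩ := exists_lt_of_csInf_lt (hmin.image v) hc
    filter_upwards [hlower (sub_one_lt _), hpos, (hW.tendsto_at p).eventually_lt_const hpc]
      with i hi hri hquot
    refine lt_of_le_of_lt ?_ hquot
    rw [show u p = ⨅ q, u q from hp]
    gcongr
    exact ciInf_le ⟨_, forall_mem_range.2 hi⟩ p

end DirectionalDerivative

section Danskin

variable {t : ℝ} {s : Set ℝ}

theorem tendsto_const_add_nhdsGT_zero (hs : s ∈ 𝓝[>] t) :
    Tendsto (fun h => t + h) (𝓝[>] 0) (𝓝[s \ {t}] t) := by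
  have hle : 𝓝[>] t ≤ 𝓝[s \ {t}] t := nhdsWithin_le_iff.2 <| by
    filter_upwards [hs, self_mem_nhdsWithin] with x hxs hx using ⟨hxs, ne_of_gt hx⟩
  refine Tendsto.mono_right ?_ hle
  rw [Tendsto, map_add_left_nhdsGT, add_zero]

theorem tendsto_const_add_nhdsLT_zero (hs : s ∈ 𝓝[<] t) :
    Tendsto (fun h => t + h) (𝓝[<] 0) (𝓝[s \ {t}] t) := by
  have hle : 𝓝[<] t ≤ 𝓝[s \ {t}] t := nhdsWithin_le_iff.2 <| by
    filter_upwards [hs, self_mem_nhdsWithin] with x hxs hx using ⟨hxs, ne_of_lt hx⟩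
  refine Tendsto.mono_right ?_ hle
  rw [Tendsto, map_add_left_nhdsLT, add_zero]

variable {M : Type*} [TopologicalSpace M] [CompactSpace M] {U Ut : ℝ → M → ℝ}

theorem tendstoUniformly_sub_div {l : Filter ℝ} (hs : Convex ℝ s)
    (hUt : ∀ x ∈ s, ∀ p, HasDerivWithinAt (fun y => U y p) (Ut x p) s x)
    (hUtc : ContinuousOn Ut.uncurry (s ×ˢ univ)) (ht : t ∈ s)
    (hl : Tendsto (fun h => t + h) l (𝓝[s \ {t}] t)) :
    TendstoUniformly (fun h p => (U (t + h) p - U t p) / h) (Ut t) l := by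
  intro V hV
  filter_upwards [hl.eventually (tendstoUniformly_slope hs hUt hUtc ht V hV)] with h hh p
  simpa only [slope_def_field, add_sub_cancel_left] using hh p

variable [Nonempty M]

theorem exists_lipschitzOnWith_iInf (hs : Convex ℝ s) (hs' : IsCompact s)
    (hU : ∀ x ∈ s, LowerSemicontinuous (U x))
    (hUt : ∀ x ∈ s, ∀ p, HasDerivWithinAt (fun y => U y p) (Ut x p) s x)
    (hUtc : ContinuousOn Ut.uncurry (s ×ˢ univ)) :
    ∃ K : NNReal, LipschitzOnWith K (fun x => ⨅ p, U x p) s := by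
  obtain ⟨C, hC⟩ := (hs'.prod isCompact_univ).exists_bound_of_continuousOn hUtc
  have hbound : ∀ p, ∀ x ∈ s, ‖Ut x p‖₊ ≤ C.toNNReal := fun p x hx =>
    NNReal.le_toNNReal_of_coe_le (hC (x, p) ⟨hx, mem_univ p⟩)
  exact ⟨C.toNNReal, lipschitzOnWith_iInf
    (fun p => hs.lipschitzOnWith_of_nnnorm_hasDerivWithin_le (fun x hx => hUt x hx p) (hbound p))
    fun x hx => bddBelow_range_of_lowerSemicontinuous (hU x hx)⟩

theorem tendsto_iInf_sub_iInf_div_nhdsGT (hs : Convex ℝ s) (hst : s ∈ 𝓝[>] t) (ht : t ∈ s)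
    (hU : LowerSemicontinuous (U t))
    (hUt : ∀ x ∈ s, ∀ p, HasDerivWithinAt (fun y => U y p) (Ut x p) s x)
    (hUtc : ContinuousOn Ut.uncurry (s ×ˢ univ)) :
    Tendsto (fun h => ((⨅ p, U (t + h) p) - ⨅ p, U t p) / h) (𝓝[>] 0)
      (𝓝 (sInf (Ut t '' {p | U t p = ⨅ q, U t q}))) :=
  tendsto_iInf_sub_iInf_div hU
    (continuousOn_univ.1 (hUtc.uncurry_left t ht)).lowerSemicontinuous tendsto_id
    (tendstoUniformly_sub_div hs hUt hUtc ht (tendsto_const_add_nhdsGT_zero hst))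

theorem tendsto_iInf_sub_iInf_div_nhdsLT (hs : Convex ℝ s) (hst : s ∈ 𝓝[<] t) (ht : t ∈ s)
    (hU : LowerSemicontinuous (U t))
    (hUt : ∀ x ∈ s, ∀ p, HasDerivWithinAt (fun y => U y p) (Ut x p) s x)
    (hUtc : ContinuousOn Ut.uncurry (s ×ˢ univ)) :
    Tendsto (fun h => ((⨅ p, U (t + h) p) - ⨅ p, U t p) / h) (𝓝[<] 0)
      (𝓝 (sSup (Ut t '' {p | U t p = ⨅ q, U t q}))) := by
  have hneg : Tendsto (fun h : ℝ => -h) (𝓝[<] 0) (𝓝[>] 0) := by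
    simpa only [neg_zero] using tendsto_neg_nhdsLT (a := (0 : ℝ))
  have hcont : Continuous (Ut t) := continuousOn_univ.1 (hUtc.uncurry_left t ht)
  have hquot : TendstoUniformly (fun h p => (U (t + h) p - U t p) / -h) (-Ut t) (𝓝[<] 0) := by
    simpa only [div_neg] using!
      (tendstoUniformly_sub_div hs hUt hUtc ht (tendsto_const_add_nhdsLT_zero hst)).neg
  have hsInf : sInf ((-Ut t) '' {p | U t p = ⨅ q, U t q})
      = -sSup (Ut t '' {p | U t p = ⨅ q, U t q}) := by
    rw [← Real.sInf_neg, ← image_neg_eq_neg, image_image]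
    rfl
  have hlim := (tendsto_iInf_sub_iInf_div hU hcont.neg.lowerSemicontinuous hneg hquot).neg
  simpa only [hsInf, div_neg, neg_neg] using hlim

end Danskin

theorem derivative_of_a_minimum_general {M : Type*} [TopologicalSpace M] [CompactSpace M]
    [Nonempty M] (a b : ℝ) (U Ut : ℝ → M → ℝ)
    (hU : ∀ t ∈ Icc a b, LowerSemicontinuous (U t))
    (hUt : ∀ t ∈ Icc a b, ∀ p, HasDerivWithinAt (fun s => U s p) (Ut t p) (Icc a b) t)
    (hUtc : ContinuousOn (fun q : ℝ × M => Ut q.1 q.2) (Icc a b ×ˢ univ))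
    (f : ℝ → ℝ) (hf : ∀ t, f t = ⨅ p, U t p) :
    (∃ K : NNReal, LipschitzOnWith K f (Icc a b)) ∧
    (∀ t ∈ Ico a b, Tendsto (fun h => (f (t + h) - f t) / h) (𝓝[>] 0)
      (𝓝 (sInf (Ut t '' {p | U t p = f t})))) ∧
    (∀ t ∈ Ioc a b, Tendsto (fun h => (f (t + h) - f t) / h) (𝓝[<] 0)
      (𝓝 (sSup (Ut t '' {p | U t p = f t})))) := by
  obtain rfl : f = fun t => ⨅ p, U t p := funext hf
  have hconv : Convex ℝ (Icc a b) := convex_Icc a b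
  refine ⟨exists_lipschitzOnWith_iInf hconv isCompact_Icc hU hUt hUtc,
    fun t ht => ?right, fun t ht => ?left⟩
  case right =>
    have htab : t ∈ Icc a b := Ico_subset_Icc_self ht
    exact tendsto_iInf_sub_iInf_div_nhdsGT hconv (Icc_mem_nhdsGT_of_mem ht) htab (hU t htab)
      hUt hUtc
  case left =>
    have htab : t ∈ Icc a b := Ioc_subset_Icc_self ht
    exact tendsto_iInf_sub_iInf_div_nhdsLT hconv (Icc_mem_nhdsLT_of_mem ht) htab (hU t htab)
      hUt hUtc

theorem derivative_of_a_minimum {M : Type*} [TopologicalSpace M] [CompactSpace M] [Nonempty M]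
    (a b : ℝ) (hab : a < b)
    (U Ut : ℝ → M → ℝ)
    (hU : ContinuousOn (fun q : ℝ × M => U q.1 q.2) (Set.Icc a b ×ˢ Set.univ))
    (hUt : ∀ t ∈ Set.Icc a b, ∀ p : M,
      HasDerivWithinAt (fun s => U s p) (Ut t p) (Set.Icc a b) t)
    (hUtc : ContinuousOn (fun q : ℝ × M => Ut q.1 q.2) (Set.Icc a b ×ˢ Set.univ))
    (f : ℝ → ℝ) (hf : ∀ t, f t = ⨅ p : M, U t p) :
    (∃ K : NNReal, LipschitzOnWith K f (Set.Icc a b)) ∧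
    (∀ t ∈ Set.Ico a b,
      Filter.Tendsto (fun h => (f (t + h) - f t) / h) (nhdsWithin 0 (Set.Ioi 0))
        (nhds (sInf ((fun p => Ut t p) '' {p : M | U t p = f t})))) ∧
    (∀ t ∈ Set.Ioc a b,
      Filter.Tendsto (fun h => (f (t + h) - f t) / h) (nhdsWithin 0 (Set.Iio 0))
        (nhds (sSup ((fun p => Ut t p) '' {p : M | U t p = f t})))) :=
  derivative_of_a_minimum_general a b U Ut
    (fun t ht => (continuousOn_univ.1 (hU.uncurry_left t ht)).lowerSemicontinuous) hUt hUtc f hf
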